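/- Let m, n be nonzero integers and let x denote the image of the first generator in the Baumslag–Solitar group BS(m,n). There exists an integer k ≥ 1 such that the cyclic subgroup ⟨x^k⟩ is a normal subgroup of BS(m,n) if and only if |m| = |n|. -/

import Mathlib

/-!
For the forward direction, `BS(m,n)` acts on the rational line by affine maps: `x` acts as
`y ↦ y + 1` and `t` as `y ↦ y * (m / n)` (`BS.toAffine`). If `⟨x^k⟩` is normal, both
`t⁻¹ x^k t` and `t x^k t⁻¹` are powers of `x^k`. They act as the translations by `k * (n / m)` and
`k * (m / n)`, so `n / m` and `m / n` are both integers, that is, `m` and `n` divide each other.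

Conversely, if `n = ± m`, the relation says that `t` conjugates `x^m` to itself or to its inverse,
and `x` commutes with it. So every element of the group conjugates `x^m` to `x^m` or `x^(-m)`
(`BS.conj_eq_or_eq_inv`), and `⟨x^|m|⟩ = ⟨x^m⟩` is normal.
-/

/-- The single relator of the Baumslag–Solitar group `BS(m,n)`:
`t⁻¹ x^m t x^{-n}`, where `x = FreeGroup.of true` and `t = FreeGroup.of false`. -/
def bsRels (m n : ℤ) : Set (FreeGroup Bool) :=
  {(FreeGroup.of false)⁻¹ * (FreeGroup.of true) ^ m * FreeGroup.of false *
    (FreeGroup.of true) ^ (-n)}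

/-- The Baumslag–Solitar group `BS(m,n) = ⟨x, t ∣ t⁻¹ x^m t = x^n⟩`. -/
def BS (m n : ℤ) : Type := PresentedGroup (bsRels m n)

instance (m n : ℤ) : Group (BS m n) := by unfold BS; infer_instance

/-- The image of the generator `x` in `BS(m,n)`. -/
def BS.x (m n : ℤ) : BS m n := PresentedGroup.of (rels := bsRels m n) true

/-- The image of the generator `t` in `BS(m,n)`. -/
def BS.t (m n : ℤ) : BS m n := PresentedGroup.of (rels := bsRels m n) false

/-- A group is residually finite if every nontrivial element is detected by a
homomorphism to a finite group. -/
def IsResiduallyFinite (G : Type*) [Group G] : Prop :=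
  ∀ g : G, g ≠ 1 → ∃ (H : Type) (_ : Group H) (_ : Finite H) (f : G →* H), f g ≠ 1

theorem BS.rel (m n : ℤ) : (BS.t m n)⁻¹ * BS.x m n ^ m * BS.t m n = BS.x m n ^ n := by
  have h : PresentedGroup.mk (bsRels m n) ((FreeGroup.of false)⁻¹ * (FreeGroup.of true) ^ m *
      FreeGroup.of false * (FreeGroup.of true) ^ (-n)) = 1 :=
    PresentedGroup.one_of_mem rfl
  simp only [map_mul, map_inv, map_zpow] at h
  rw [zpow_neg, mul_inv_eq_one] at h
  exact h

/-- The images of the generators in the affine group of `ℚ`, as permutations of `ℚ`: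
`true` (that is, `x`) is sent to `y ↦ y + 1`, and `false` (that is, `t`) to `y ↦ y * (m / n)`. -/
noncomputable def BS.affineGen (m n : ℤ) (hm : m ≠ 0) (hn : n ≠ 0) : Bool → Equiv.Perm ℚ
  | true => Equiv.addRight 1
  | false => Equiv.mulRight₀ ((m : ℚ) / n) (by positivity)

theorem addRight_one_zpow_apply (j : ℤ) (y : ℚ) :
    ((Equiv.addRight (1 : ℚ) : Equiv.Perm ℚ) ^ j) y = y + j := by
  simp

/-- The affine action of `BS(m,n)` on `ℚ`. -/
noncomputable def BS.toAffine (m n : ℤ) (hm : m ≠ 0) (hn : n ≠ 0) : BS m n →* Equiv.Perm ℚ :=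
  PresentedGroup.toGroup (f := BS.affineGen m n hm hn) (by
    have hm' : (m : ℚ) ≠ 0 := by exact_mod_cast hm
    have hn' : (n : ℚ) ≠ 0 := by exact_mod_cast hn
    rintro r rfl
    simp only [map_mul, map_inv, map_zpow, FreeGroup.lift_apply_of]
    rw [zpow_neg, mul_inv_eq_one, mul_assoc, inv_mul_eq_iff_eq_mul]
    ext y
    simp only [BS.affineGen, Equiv.Perm.mul_apply, addRight_one_zpow_apply,
      Equiv.mulRight₀_apply]
    field_simp)

theorem BS.toAffine_x_zpow_apply (m n : ℤ) (hm : m ≠ 0) (hn : n ≠ 0) (j : ℤ) (y : ℚ) :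
    BS.toAffine m n hm hn (BS.x m n ^ j) y = y + j := by
  have h : BS.toAffine m n hm hn (BS.x m n) = Equiv.addRight 1 :=
    PresentedGroup.toGroup.of _
  rw [map_zpow, h, addRight_one_zpow_apply]

theorem BS.toAffine_t_apply (m n : ℤ) (hm : m ≠ 0) (hn : n ≠ 0) (y : ℚ) :
    BS.toAffine m n hm hn (BS.t m n) y = y * (m / n) := by
  have h : BS.toAffine m n hm hn (BS.t m n) = BS.affineGen m n hm hn false :=
    PresentedGroup.toGroup.of _
  rw [h]; rfl

/-- If `t` and `t⁻¹` both conjugate `x^k` into `⟨x^k⟩`, the dilation factor `m / n` and its inverse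
are integers. -/
theorem BS.abs_eq_of_normal (m n : ℤ) (hm : m ≠ 0) (hn : n ≠ 0) (k : ℤ) (hk : 1 ≤ k)
    (h : (Subgroup.zpowers (BS.x m n ^ k)).Normal) : |m| = |n| := by
  have hm' : (m : ℚ) ≠ 0 := by exact_mod_cast hm
  have hn' : (n : ℚ) ≠ 0 := by exact_mod_cast hn
  have hk' : (k : ℚ) ≠ 0 := by exact_mod_cast (by omega : k ≠ 0)
  obtain ⟨a, ha⟩ := Subgroup.mem_zpowers_iff.1
    (h.conj_mem _ (Subgroup.mem_zpowers _) (BS.t m n))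
  obtain ⟨b, hb⟩ := Subgroup.mem_zpowers_iff.1
    (h.conj_mem _ (Subgroup.mem_zpowers _) (BS.t m n)⁻¹)
  rw [inv_inv, mul_assoc, eq_inv_mul_iff_mul_eq, ← zpow_mul] at hb
  rw [eq_mul_inv_iff_mul_eq, ← zpow_mul] at ha
  -- Both sides of each conjugation identity are compared at the point `0`.
  have ha0 := congrArg (fun g => BS.toAffine m n hm hn g 0) ha
  have hb0 := congrArg (fun g => BS.toAffine m n hm hn g 0) hb
  simp only [map_mul, Equiv.Perm.mul_apply, BS.toAffine_x_zpow_apply,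
    BS.toAffine_t_apply, Int.cast_mul, zero_mul, zero_add] at ha0 hb0
  have hnm : n ∣ m := by
    refine ⟨a, ?_⟩
    field_simp at ha0
    have : (m : ℚ) = n * a := by linarith
    exact_mod_cast this
  have hmn : m ∣ n := by
    refine ⟨b, ?_⟩
    field_simp at hb0
    have : (n : ℚ) = m * b := by linarith
    exact_mod_cast this
  exact abs_eq_abs.2 (Int.associated_iff.1 (associated_of_dvd_dvd hmn hnm))

theorem BS.conj_eq_or_eq_inv (m n : ℤ) (h : |m| = |n|) (g : BS m n) :
    g * BS.x m n ^ m * g⁻¹ = BS.x m n ^ m ∨ g * BS.x m n ^ m * g⁻¹ = (BS.x m n ^ m)⁻¹ := by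
  have key : ∀ g : BS m n, g ∈ Subgroup.closure (Set.range (PresentedGroup.of (rels := bsRels m n)))
      → (g * BS.x m n ^ m * g⁻¹ = BS.x m n ^ m ∨
        g * BS.x m n ^ m * g⁻¹ = (BS.x m n ^ m)⁻¹) := by
    intro g hg
    have hinv : ∀ a z : BS m n, (a * z * a⁻¹ = z ∨ a * z * a⁻¹ = z⁻¹) →
        (a⁻¹ * z * a⁻¹⁻¹ = z ∨ a⁻¹ * z * a⁻¹⁻¹ = z⁻¹) := by
      rintro a z (h | h)
      · left; nth_rw 1 [← h]; group
      · right
        have hz : z = a * z⁻¹ * a⁻¹ := by rw [← conj_inv, h, inv_inv]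
        nth_rw 1 [hz]
        group
    induction hg using Subgroup.closure_induction with
    | mem g hg =>
      obtain ⟨b, rfl⟩ := hg
      cases b with
      | true =>
        left
        change BS.x m n * BS.x m n ^ m * (BS.x m n)⁻¹ = BS.x m n ^ m
        group
      | false =>
        change BS.t m n * BS.x m n ^ m * (BS.t m n)⁻¹ = BS.x m n ^ m ∨
          BS.t m n * BS.x m n ^ m * (BS.t m n)⁻¹ = (BS.x m n ^ m)⁻¹
        have hr := BS.rel m n
        rw [← inv_inv (BS.t m n)]
        apply hinv
        rw [inv_inv, hr]
        rcases abs_eq_abs.1 h with h | h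
        · left; rw [h]
        · right; rw [← zpow_neg, h, neg_neg]
    | one => left; group
    | mul a b _ _ ha hb =>
      have e : a * b * BS.x m n ^ m * (a * b)⁻¹ = a * (b * BS.x m n ^ m * b⁻¹) * a⁻¹ := by group
      rw [e]
      rcases hb with hb | hb <;> rw [hb]
      · exact ha
      · rw [← conj_inv]
        rcases ha with ha | ha <;> rw [ha]
        · right; rfl
        · left; exact inv_inv _
    | inv a _ ha => exact hinv _ _ ha
  apply key
  have := PresentedGroup.closure_range_of (bsRels m n)
  exact this ▸ Subgroup.mem_top g

theorem BS.normal_zpowers (m n : ℤ) (h : |m| = |n|) :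
    (Subgroup.zpowers (BS.x m n ^ m)).Normal := by
  refine ⟨fun z hz g => ?_⟩
  obtain ⟨j, rfl⟩ := Subgroup.mem_zpowers_iff.1 hz
  rw [← conj_zpow]
  apply zpow_mem
  rcases BS.conj_eq_or_eq_inv m n h g with e | e <;> rw [e]
  · exact Subgroup.mem_zpowers _
  · exact inv_mem (Subgroup.mem_zpowers _)

/-- `BS(m,n)` has a normal subgroup of the form `⟨x^k⟩` with `k ≥ 1` iff `|m| = |n|`. -/
theorem bs_exists_normal_zpowers_iff (m n : ℤ) (hm : m ≠ 0) (hn : n ≠ 0) :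
    (∃ k : ℤ, 1 ≤ k ∧ (Subgroup.zpowers (BS.x m n ^ k)).Normal) ↔ |m| = |n| := by
  constructor
  · rintro ⟨k, hk, h⟩
    exact BS.abs_eq_of_normal m n hm hn k hk h
  · intro h
    refine ⟨|m|, Int.one_le_abs hm, ?_⟩
    have hN := BS.normal_zpowers m n h
    rcases abs_choice m with e | e <;> rw [e]
    · exact hN
    · rwa [zpow_neg, Subgroup.zpowers_inv]
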